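/- If τ : I → K₊ is twice Fréchet differentiable, then the second directional derivative of Ñ = N ∘ τ along a single direction η satisfies D² Ñ(ι; η, η) = (2 P_{τ'}(η)² + P_{τ''}(η²)) Ñ(ι), where P_{τ'}(η) = P_{τ(ι)}(Dτ(ι;η)) and P_{τ''}(η²) = P_{τ(ι)}(D²τ(ι;η,η)). -/

import Mathlib

open Set in
/-- If `P` satisfies the equation `D_x P_x(ξ)(η) = P_x(η) P_x(ξ)` on a set containing the segment
from `x` to `x + v`, then `(1 - P_x(v)) P_{x+v}(ξ) = P_x(ξ)`. -/
theorem one_sub_mul_eq_of_hasFDerivAt {K A : Type*} [NormedAddCommGroup K] [NormedSpace ℂ K]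
    [NormedRing A] [NormedAlgebra ℂ A] {P : K → K →L[ℂ] A} {DP : K → K → K →L[ℂ] A} {s : Set K}
    (hDP : ∀ x ∈ s, ∀ ξ η : K, DP x ξ η = P x η * P x ξ)
    (hP : ∀ x ∈ s, ∀ ξ : K, HasFDerivAt (fun y => P y ξ) (DP x ξ) x)
    {x v : K} (hs : ∀ t ∈ Icc (0 : ℝ) 1, x + t • v ∈ s) (ξ : K) :
    (1 - P x v) * P (x + v) ξ = P x ξ := by
  have hderiv : ∀ t ∈ Icc (0 : ℝ) 1, ∀ ζ : K, HasDerivAt (fun t : ℝ => P (x + t • v) ζ)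
      (P (x + t • v) v * P (x + t • v) ζ) t := by
    intro t ht ζ
    have hline : HasDerivAt (fun t : ℝ => x + t • v) v t := by
      simpa using ((hasDerivAt_id t).smul_const v).const_add x
    have := ((hP _ (hs t ht) ζ).restrictScalars ℝ).comp_hasDerivAt t hline
    simpa [Function.comp_def, hDP _ (hs t ht)] using this
  have hfactor : ∀ t : ℝ, HasDerivAt (fun t : ℝ => 1 - t • P x v) (-P x v) t := fun t => by
    simpa using ((hasDerivAt_id t).smul_const (P x v)).const_sub 1
  have hcont : ContinuousOn (fun t : ℝ => P (x + t • v) v) (Icc 0 1) :=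
    fun t ht => (hderiv t ht v).continuousAt.continuousWithinAt
  obtain ⟨C, hC⟩ := isCompact_Icc.exists_bound_of_continuousOn hcont
  have hriccati : ∀ t ∈ Icc (0 : ℝ) 1, (1 - t • P x v) * P (x + t • v) v - P x v = 0 := by
    have hu : ∀ t ∈ Icc (0 : ℝ) 1,
        HasDerivAt (fun t : ℝ => (1 - t • P x v) * P (x + t • v) v - P x v)
          (((1 - t • P x v) * P (x + t • v) v - P x v) * P (x + t • v) v) t := by
      intro t ht
      refine (((hfactor t).mul (hderiv t ht v)).sub_const (P x v)).congr_deriv ?_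
      rw [sub_mul _ (P x v), mul_assoc, neg_mul]
      abel
    refine eq_zero_of_abs_deriv_le_mul_abs_self_of_eq_zero_right (K := C)
      (fun t ht => (hu t ht).continuousAt.continuousWithinAt)
      (fun t ht => (hu t (Ico_subset_Icc_self ht)).hasDerivWithinAt) (by simp) fun t ht => ?_
    refine (norm_mul_le _ _).trans ?_
    rw [mul_comm]
    exact mul_le_mul_of_nonneg_right (hC t (Ico_subset_Icc_self ht)) (norm_nonneg _)
  have hzero : ∀ t ∈ Icc (0 : ℝ) 1,
      HasDerivAt (fun t : ℝ => (1 - t • P x v) * P (x + t • v) ξ) 0 t := by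
    intro t ht
    refine ((hfactor t).mul (hderiv t ht ξ)).congr_deriv ?_
    rw [← mul_assoc, sub_eq_zero.mp (hriccati t ht), neg_mul, neg_add_cancel]
  simpa using constant_of_has_deriv_right_zero
    (fun t ht => (hzero t ht).continuousAt.continuousWithinAt)
    (fun t ht => (hzero t (Ico_subset_Icc_self ht)).hasDerivWithinAt) 1 (right_mem_Icc.mpr zero_le_one)

open Set Topology in
/-- A family `P` whose evaluations satisfy `D_x P_x(ξ)(η) = P_x(η) P_x(ξ)` is differentiable in
operator norm. -/
theorem differentiableAt_of_hasFDerivAt_apply {K A : Type*} [NormedAddCommGroup K]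
    [NormedSpace ℂ K] [NormedRing A] [NormedAlgebra ℂ A] [CompleteSpace A]
    {P : K → K →L[ℂ] A} {DP : K → K → K →L[ℂ] A} {s : Set K} (hs : IsOpen s)
    (hDP : ∀ x ∈ s, ∀ ξ η : K, DP x ξ η = P x η * P x ξ)
    (hP : ∀ x ∈ s, ∀ ξ : K, HasFDerivAt (fun y => P y ξ) (DP x ξ) x)
    {x : K} (hx : x ∈ s) : DifferentiableAt ℂ P x := by
  have hsub : DifferentiableAt ℂ (fun y => 1 - P x (y - x)) x := by fun_prop
  have hdiff : DifferentiableAt ℂ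
      (fun y => (ContinuousLinearMap.mul ℂ A (Ring.inverse (1 - P x (y - x)))).comp (P x)) x := by
    have hinv : DifferentiableAt ℂ (fun y => Ring.inverse (1 - P x (y - x))) x :=
      DifferentiableAt.fun_comp' (g := Ring.inverse) x (differentiableAt_inverse (by simp)) hsub
    fun_prop
  refine hdiff.congr_of_eventuallyEq ?_
  have hunit : ∀ᶠ y in 𝓝 x, IsUnit (1 - P x (y - x)) :=
    hsub.continuousAt.eventually (Units.isOpen.mem_nhds (by simp))
  obtain ⟨r, hr, hball⟩ := Metric.isOpen_iff.mp hs x hx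
  filter_upwards [hunit, Metric.ball_mem_nhds x hr] with y hy hyr
  ext ξ
  have hseg : ∀ t ∈ Icc (0 : ℝ) 1, x + t • (y - x) ∈ s := fun t ht =>
    hball ((convex_ball x r).add_smul_sub_mem (Metric.mem_ball_self hr) hyr ht)
  have hres := one_sub_mul_eq_of_hasFDerivAt hDP hP hseg ξ
  rw [add_sub_cancel] at hres
  rw [ContinuousLinearMap.comp_apply, ContinuousLinearMap.mul_apply', ← hres,
    Ring.inverse_mul_cancel_left _ _ hy]


/-- Second-derivative formula (Lemma 2.5):
`D² Ñ(ι; η, η) = (2 P_{τ'}(η)² + P_{τ''}(η²)) Ñ(ι)` for `Ñ = N ∘ τ`. -/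
theorem stmt7
    {H : Type*} [NormedAddCommGroup H] [InnerProductSpace ℂ H] [CompleteSpace H]
    {X : Type*} [NormedAddCommGroup X] [InnerProductSpace ℂ X] [FiniteDimensional ℂ X]
    {K : Type*} [NormedAddCommGroup K] [NormedSpace ℂ K]
    {B : Type*} [NormedAddCommGroup B] [NormedSpace ℂ B]
    (N : K → X →L[ℂ] H) (P : K → K →L[ℂ] (H →L[ℂ] H))
    (Kplus : Set K) (hKplus : IsOpen Kplus)
    -- the structure of the derivatives of N and P (Theorem 2.2 and Lemma 2.1)
    (DN : K → K →L[ℂ] (X →L[ℂ] H))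
    (hDN : ∀ τ ∈ Kplus, ∀ ξ : K, DN τ ξ = (P τ ξ).comp (N τ))
    (hNderiv : ∀ τ ∈ Kplus, HasFDerivAt N (DN τ) τ)
    (DP : K → K → K →L[ℂ] (H →L[ℂ] H))
    (hDP : ∀ τ ∈ Kplus, ∀ ξ η : K, DP τ ξ η = (P τ η) * (P τ ξ))
    (hPderiv : ∀ τ ∈ Kplus, ∀ ξ : K, HasFDerivAt (fun s : K => P s ξ) (DP τ ξ) τ)
    -- a twice continuously differentiable parametrization τ : I → K₊
    (I : Set B) (hI : IsOpen I) (τp : B → K) (hmaps : ∀ s ∈ I, τp s ∈ Kplus)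
    (hτ : ContDiffOn ℂ 2 τp I)
    (ι : B) (hι : ι ∈ I) (η : B) :
    (iteratedFDeriv ℂ 2 (fun s : B => N (τp s)) ι) (fun _ => η) =
      (2 • (P (τp ι) (fderiv ℂ τp ι η) * P (τp ι) (fderiv ℂ τp ι η)) +
        P (τp ι) ((iteratedFDeriv ℂ 2 τp ι) fun _ => η)).comp (N (τp ι)) := by
  have hτι := hmaps ι hι
  have hPdiff := differentiableAt_of_hasFDerivAt_apply hKplus hDP hPderiv hτι
  have hDP_apply : ∀ ξ ζ : K, fderiv ℂ P (τp ι) ζ ξ = P (τp ι) ζ * P (τp ι) ξ := by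
    intro ξ ζ
    rw [← hDP _ hτι ξ ζ, (hPderiv _ hτι ξ).unique
      (hPdiff.hasFDerivAt.clm_apply (hasFDerivAt_const ξ (τp ι)))]
    simp
  have hτdiff : ∀ s ∈ I, DifferentiableAt ℂ τp s := fun s hs =>
    (hτ.contDiffAt (hI.mem_nhds hs)).differentiableAt two_ne_zero
  have hτdiff2 : DifferentiableAt ℂ (fderiv ℂ τp) ι :=
    ((hτ.contDiffAt (hI.mem_nhds hι)).fderiv_right (m := 1) (by norm_num)).differentiableAt
      one_ne_zero
  have hPτ : HasFDerivAt (fun s => P (τp s)) ((fderiv ℂ P (τp ι)).comp (fderiv ℂ τp ι)) ι :=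
    hPdiff.hasFDerivAt.comp ι (hτdiff ι hι).hasFDerivAt
  have hN : ∀ s ∈ I, HasFDerivAt (fun s => N (τp s)) ((DN (τp s)).comp (fderiv ℂ τp s)) s :=
    fun s hs => (hNderiv _ (hmaps s hs)).comp s (hτdiff s hs).hasFDerivAt
  have hfderiv : fderiv ℂ (fun s => N (τp s)) =ᶠ[nhds ι] fun s =>
      ((ContinuousLinearMap.compL ℂ X H H).flip (N (τp s))).comp
        ((P (τp s)).comp (fderiv ℂ τp s)) := by
    filter_upwards [hI.mem_nhds hι] with s hs
    rw [(hN s hs).fderiv]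
    ext ζ : 1
    simp [hDN _ (hmaps s hs)]
  have hNdiff2 : DifferentiableAt ℂ (fderiv ℂ (fun s => N (τp s))) ι := by
    refine DifferentiableAt.congr_of_eventuallyEq ?_ hfderiv
    exact ((ContinuousLinearMap.compL ℂ X H H).flip.differentiableAt.comp ι
      (hN ι hι).differentiableAt).clm_comp (hPτ.differentiableAt.clm_comp hτdiff2)
  have hleft := hNdiff2.hasFDerivAt.clm_apply (hasFDerivAt_const η ι)
  have hright := (hPτ.clm_apply
    (hτdiff2.hasFDerivAt.clm_apply (hasFDerivAt_const η ι))).clm_comp (hN ι hι)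
  have heq := hleft.unique (hright.congr_of_eventuallyEq
    (hfderiv.mono fun s hs => by simp [hs]))
  have hη := congrArg (fun L => L η) heq
  rw [iteratedFDeriv_two_apply, iteratedFDeriv_two_apply]
  simp only [add_apply, ContinuousLinearMap.comp_apply,
    ContinuousLinearMap.flip_apply, zero_apply, map_zero, zero_add,
    ContinuousLinearMap.compL_apply, hDP_apply, hDN _ hτι] at hη
  rw [hη]
  ext x
  simp [two_smul]
  abel
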